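/- arXiv:math/0508421 — 2 statements merged into one kernel-verified Lean document; each statement's English description precedes it below -/
import Mathlib

section
/- For every binary quintic F over ℂ, B₁(F) = (5¹⁶/(2³⁵·3³))·(2¹⁶·7·K³ − 2¹⁰·23·K²J² + 2²·71·K·J⁴ − J⁶), where J = J(F), K = K(F). -/
/-!
The five quartic discriminants `S(Qᵢ)³ - 27T(Qᵢ)²` are, up to the factor `1/256`, the squared
products of the brackets `(λⱼλₖ)` with `j, k ≠ i`. Hence the coefficient of `z⁴` in the product
defining the `Bᵢ` factors as

  `B₁ = -2⁻³² · Δ² · W`,  with `Δ = ∏_{i<j} (λᵢλⱼ)²` and `W = Σᵢ S(Qᵢ)³ ∏_{j≠i} (λᵢλⱼ)²`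

(`Binv_one_eq`). Both `Δ` and `W` are invariants of degree `8`, and `rootIdentities` gives

  `Δ = 5⁵ (J² - 128 K)`,  `W = -(5⁶/6³) (28 K - J²)`.

Substituting these gives the theorem: the cubic in `K` and `J²` on its right side equals
`(J² - 128 K)² (28 K - J²)`.

All quantities are computed as explicit polynomials in the roots. To prove the two identities,
both sides are shown to be unchanged by shears of the roots and by swapping the two variables;
these moves bring the last two roots onto the coordinate axes, where the identities are small
enough for polynomial normalization. For `J` and `K` the invariance is checked along the chain of
covariants `C₁`, `C₂`, using the coefficients of forms with binomial factors.
-/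

noncomputable section

open MvPolynomial

abbrev P2 := MvPolynomial (Fin 2) ℂ

/-- The bracket `(bc) = b₁c₂ − b₂c₁` of two points of `ℂ²`. -/
def br (b c : Fin 2 → ℂ) : ℂ := b 0 * c 1 - b 1 * c 0

/-- The linear binary form `(xλ) = x₁λ₂ − x₂λ₁` with homogeneous root `λ`. -/
def lin (l : Fin 2 → ℂ) : P2 := C (l 1) * X 0 - C (l 0) * X 1

/-- The binary quintic with homogeneous roots `λ₁,…,λ₅`. -/
def quinticOf (l : Fin 5 → Fin 2 → ℂ) : P2 := ∏ i, lin (l i)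

/-- The binary quartic obtained from the quintic with roots `λ₁,…,λ₅` by
omitting the `i`-th factor. -/
def quarticOmit (l : Fin 5 → Fin 2 → ℂ) (i : Fin 5) : P2 :=
  ∏ j ∈ Finset.univ.erase i, lin (l j)

/-- The binary quartic with homogeneous roots `ξ₁,…,ξ₄`. -/
def quarticOf (l : Fin 4 → Fin 2 → ℂ) : P2 := ∏ i, lin (l i)

/-- The coefficient of `x₁^i x₂^j` in a binary form. -/
def mcoeff (i j : ℕ) (F : P2) : ℂ :=
  MvPolynomial.coeff (Finsupp.single 0 i + Finsupp.single 1 j) F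

/-- The invariant `S = q₀q₄ − 4q₁q₃ + 3q₂²` of a binary quartic
`Q = q₀x₁⁴ + 4q₁x₁³x₂ + 6q₂x₁²x₂² + 4q₃x₁x₂³ + q₄x₂⁴`. -/
def Sq (Q : P2) : ℂ :=
  mcoeff 4 0 Q * mcoeff 0 4 Q - 4 * (mcoeff 3 1 Q / 4) * (mcoeff 1 3 Q / 4)
    + 3 * (mcoeff 2 2 Q / 6) ^ 2

/-- The invariant `T = q₀q₂q₄ + 2q₁q₂q₃ − q₂³ − q₀q₃² − q₁²q₄` of a binary quartic. -/
def Tq (Q : P2) : ℂ :=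
  mcoeff 4 0 Q * (mcoeff 2 2 Q / 6) * mcoeff 0 4 Q
    + 2 * (mcoeff 3 1 Q / 4) * (mcoeff 2 2 Q / 6) * (mcoeff 1 3 Q / 4)
    - (mcoeff 2 2 Q / 6) ^ 3 - mcoeff 4 0 Q * (mcoeff 1 3 Q / 4) ^ 2
    - (mcoeff 3 1 Q / 4) ^ 2 * mcoeff 0 4 Q

/-- The quintic `R̄ = ∏ᵢ ((S(Qᵢ)³ − 27T(Qᵢ)²)z − S(Qᵢ)³)` in the variable `z`. -/
def Rbar (l : Fin 5 → Fin 2 → ℂ) : Polynomial ℂ :=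
  ∏ i : Fin 5,
    (Polynomial.C (Sq (quarticOmit l i) ^ 3 - 27 * Tq (quarticOmit l i) ^ 2) * Polynomial.X
      - Polynomial.C (Sq (quarticOmit l i) ^ 3))

/-- The invariant `Bᵢ`, defined by `R̄ = Σᵢ Bᵢ z^(5−i)`. -/
def Binv (l : Fin 5 → Fin 2 → ℂ) (i : ℕ) : ℂ := (Rbar l).coeff (5 - i)

/-- Partial derivative of a binary form. -/
def pd (i : Fin 2) (F : P2) : P2 := MvPolynomial.pderiv i F

/-- The `k`-th transvectant of binary forms `F`, `G` of orders `p`, `q`. -/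
def transv (p q k : ℕ) (F G : P2) : P2 :=
  C ((Nat.factorial (p - k) * Nat.factorial (q - k) : ℂ)
      / (Nat.factorial p * Nat.factorial q)) *
  ∑ i ∈ Finset.range (k + 1),
    C ((-1 : ℂ) ^ i * (Nat.choose k i : ℂ)) *
      ((pd 1)^[i] ((pd 0)^[k - i] F)) * ((pd 0)^[i] ((pd 1)^[k - i] G))

/-- The covariant `C₁ = (F,F)₄` of a binary quintic. -/
def cov1 (F : P2) : P2 := transv 5 5 4 F F
/-- The covariant `C₂ = (F,C₁)₂` of a binary quintic. -/
def cov2 (F : P2) : P2 := transv 5 2 2 F (cov1 F)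
/-- The covariant `C₃ = (C₂,C₂)₂` of a binary quintic. -/
def cov3 (F : P2) : P2 := transv 3 3 2 (cov2 F) (cov2 F)
/-- The covariant `C₄ = (C₂,C₁)₂` of a binary quintic. -/
def cov4 (F : P2) : P2 := transv 3 2 2 (cov2 F) (cov1 F)

/-- The degree `4` invariant `J = −½(C₁,C₁)₂` of a binary quintic. -/
def Jinv (F : P2) : ℂ := -(1/2) * constantCoeff (transv 2 2 2 (cov1 F) (cov1 F))
/-- The degree `8` invariant `K = ⅛(C₁,C₃)₂` of a binary quintic. -/
def Kinv (F : P2) : ℂ := (1/8) * constantCoeff (transv 2 2 2 (cov1 F) (cov3 F))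
/-- The degree `12` invariant `L = (1/96)(C₃,C₃)₂` of a binary quintic. -/
def Linv (F : P2) : ℂ := (1/96) * constantCoeff (transv 2 2 2 (cov3 F) (cov3 F))
/-- The degree `18` invariant `H = −(1/384)((C₄,C₃)₁,(C₁,C₄)₁)₁` of a binary quintic. -/
def Hinv (F : P2) : ℂ :=
  -(1/384) *
    constantCoeff (transv 1 1 1 (transv 1 2 1 (cov4 F) (cov3 F)) (transv 2 1 1 (cov1 F) (cov4 F)))

/-- The coefficients `a₀,…,a₅` of a binary quintic `F = Σ aᵢ x₁^(5−i) x₂^i`. -/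
def qcoeffs (F : P2) : Fin 6 → ℂ := fun i => mcoeff (5 - (i : ℕ)) (i : ℕ) F

/-- The binary quintic with coefficients `a₀,…,a₅`. -/
def formOf (a : Fin 6 → ℂ) : P2 := ∑ i : Fin 6, C (a i) * X 0 ^ (5 - (i : ℕ)) * X 1 ^ (i : ℕ)

/-- The `GL₂(ℂ)` action on binary forms, `(gF)(x) = F(g⁻¹x)`. -/
def act (g : Matrix.GeneralLinearGroup (Fin 2) ℂ) (F : P2) : P2 :=
  aeval (fun i => ∑ j,
    C (((g⁻¹ : Matrix.GeneralLinearGroup (Fin 2) ℂ) : Matrix (Fin 2) (Fin 2) ℂ) i j) * X j) F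

/-- The `SL₂(ℂ)` action on binary forms, `(gF)(x) = F(g⁻¹x)`. -/
def actSL (g : Matrix.SpecialLinearGroup (Fin 2) ℂ) (F : P2) : P2 :=
  aeval (fun i => ∑ j,
    C (((g⁻¹ : Matrix.SpecialLinearGroup (Fin 2) ℂ) : Matrix (Fin 2) (Fin 2) ℂ) i j) * X j) F

/-- `P` (a polynomial in the coefficients `a₀,…,a₅` of a binary quintic) is an
`SL₂(ℂ)`-invariant: `P(gF) = P(F)` for all `g ∈ SL₂(ℂ)`. -/
def IsInvariantPoly (P : MvPolynomial (Fin 6) ℂ) : Prop :=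
  ∀ (g : Matrix.SpecialLinearGroup (Fin 2) ℂ) (a : Fin 6 → ℂ),
    MvPolynomial.eval (qcoeffs (actSL g (formOf a))) P = MvPolynomial.eval a P

/-- The discriminant `∏_{i<j} (λᵢλⱼ)²` of a binary quintic with roots `λ₁,…,λ₅`. -/
def disc5 (l : Fin 5 → Fin 2 → ℂ) : ℂ := ∏ i, ∏ j ∈ Finset.Ioi i, br (l i) (l j) ^ 2

/-- The discriminant `∏_{i<j} (ξᵢξⱼ)²` of a binary quartic with roots `ξ₁,…,ξ₄`. -/
def disc4 (l : Fin 4 → Fin 2 → ℂ) : ℂ := ∏ i, ∏ j ∈ Finset.Ioi i, br (l i) (l j) ^ 2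

/-- The Sylvester canonical form `u x₁⁵ + v x₂⁵ − w (x₁+x₂)⁵`. -/
def sylvester (u v w : ℂ) : P2 := C u * X 0 ^ 5 + C v * X 1 ^ 5 - C w * (X 0 + X 1) ^ 5

/-- The submodule of `SL₂(ℂ)`-invariant polynomials in the coefficients of the
binary quintic. -/
def invariantSubmodule : Submodule ℂ (MvPolynomial (Fin 6) ℂ) :=
  ⨅ (g : Matrix.SpecialLinearGroup (Fin 2) ℂ), ⨅ (a : Fin 6 → ℂ),
    LinearMap.ker
      ((aeval (R := ℂ) (qcoeffs (actSL g (formOf a)))).toLinearMap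
        - (aeval (R := ℂ) a).toLinearMap)

/-! ### Binary forms with binomial coefficients -/

/-- The quadratic form `u₀x₁² + 2u₁x₁x₂ + u₂x₂²`. -/
def quadForm (u₀ u₁ u₂ : ℂ) : P2 :=
  C u₀ * X 0 ^ 2 * X 1 ^ 0 + C (2 * u₁) * X 0 ^ 1 * X 1 ^ 1 + C u₂ * X 0 ^ 0 * X 1 ^ 2

/-- The cubic form `v₀x₁³ + 3v₁x₁²x₂ + 3v₂x₁x₂² + v₃x₂³`. -/
def cubicForm (v₀ v₁ v₂ v₃ : ℂ) : P2 :=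
  C v₀ * X 0 ^ 3 * X 1 ^ 0 + C (3 * v₁) * X 0 ^ 2 * X 1 ^ 1 + C (3 * v₂) * X 0 ^ 1 * X 1 ^ 2
    + C v₃ * X 0 ^ 0 * X 1 ^ 3

/-- The quintic form `Σ (5 choose i) aᵢ x₁^(5-i) x₂^i`. -/
def quinticForm (a : Fin 6 → ℂ) : P2 :=
  C (a 0) * X 0 ^ 5 * X 1 ^ 0 + C (5 * a 1) * X 0 ^ 4 * X 1 ^ 1
    + C (10 * a 2) * X 0 ^ 3 * X 1 ^ 2 + C (10 * a 3) * X 0 ^ 2 * X 1 ^ 3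
    + C (5 * a 4) * X 0 ^ 1 * X 1 ^ 4 + C (a 5) * X 0 ^ 0 * X 1 ^ 5

/-- The coefficient of `x₁²` in `C₁`. -/
def u₀ (a : Fin 6 → ℂ) : ℂ := 2 * (a 0 * a 4 - 4 * a 1 * a 3 + 3 * a 2 ^ 2)
/-- The coefficient of `2x₁x₂` in `C₁`. -/
def u₁ (a : Fin 6 → ℂ) : ℂ := a 0 * a 5 - 3 * a 1 * a 4 + 2 * a 2 * a 3
/-- The coefficient of `x₂²` in `C₁`. -/
def u₂ (a : Fin 6 → ℂ) : ℂ := 2 * (a 1 * a 5 - 4 * a 2 * a 4 + 3 * a 3 ^ 2)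

/-- The coefficient of `x₁³` in `C₂`. -/
def v₀ (a : Fin 6 → ℂ) : ℂ := a 0 * u₂ a - 2 * a 1 * u₁ a + a 2 * u₀ a
/-- The coefficient of `3x₁²x₂` in `C₂`. -/
def v₁ (a : Fin 6 → ℂ) : ℂ := a 1 * u₂ a - 2 * a 2 * u₁ a + a 3 * u₀ a
/-- The coefficient of `3x₁x₂²` in `C₂`. -/
def v₂ (a : Fin 6 → ℂ) : ℂ := a 2 * u₂ a - 2 * a 3 * u₁ a + a 4 * u₀ a
/-- The coefficient of `x₂³` in `C₂`. -/
def v₃ (a : Fin 6 → ℂ) : ℂ := a 3 * u₂ a - 2 * a 4 * u₁ a + a 5 * u₀ a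

/-- The coefficient of `x₁²` in `C₃`. -/
def w₀ (a : Fin 6 → ℂ) : ℂ := 2 * (v₀ a * v₂ a - v₁ a ^ 2)
/-- The coefficient of `2x₁x₂` in `C₃`. -/
def w₁ (a : Fin 6 → ℂ) : ℂ := v₀ a * v₃ a - v₁ a * v₂ a
/-- The coefficient of `x₂²` in `C₃`. -/
def w₂ (a : Fin 6 → ℂ) : ℂ := 2 * (v₁ a * v₃ a - v₂ a ^ 2)

/-- The invariant `J` as a polynomial in the binomial coefficients of the quintic. -/
def coeffJ (a : Fin 6 → ℂ) : ℂ := u₁ a ^ 2 - u₀ a * u₂ a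

/-- The invariant `K` as a polynomial in the binomial coefficients of the quintic. -/
def coeffK (a : Fin 6 → ℂ) : ℂ := (1 / 8) * (u₀ a * w₂ a - 2 * u₁ a * w₁ a + u₂ a * w₀ a)

lemma pd_add (i : Fin 2) (F G : P2) : pd i (F + G) = pd i F + pd i G :=
  map_add (pderiv i) F G

lemma pd_zero_term (a : ℂ) (m n : ℕ) :
    pd 0 (C a * X 0 ^ m * X 1 ^ n) = C (a * m) * X 0 ^ (m - 1) * X 1 ^ n := by
  simp [pd, pderiv_X]
  ring

lemma pd_one_term (a : ℂ) (m n : ℕ) :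
    pd 1 (C a * X 0 ^ m * X 1 ^ n) = C (a * n) * X 0 ^ m * X 1 ^ (n - 1) := by
  simp [pd, pderiv_X]
  ring

lemma cov1_quinticForm (a : Fin 6 → ℂ) :
    cov1 (quinticForm a) = quadForm (u₀ a) (u₁ a) (u₂ a) := by
  apply MvPolynomial.funext
  intro x
  simp only [cov1, transv, quinticForm, quadForm, Finset.sum_range_succ, Finset.sum_range_zero,
    Function.iterate_succ, Function.iterate_zero, Function.comp_apply, id_eq, Nat.reduceAdd,
    Nat.reduceSub, pd_add, pd_zero_term, pd_one_term]
  simp [Nat.factorial, Nat.choose, u₀, u₁, u₂]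
  ring

lemma transv_quintic_quad (a : Fin 6 → ℂ) (r s t : ℂ) :
    transv 5 2 2 (quinticForm a) (quadForm r s t) =
      cubicForm (a 0 * t - 2 * a 1 * s + a 2 * r) (a 1 * t - 2 * a 2 * s + a 3 * r)
        (a 2 * t - 2 * a 3 * s + a 4 * r) (a 3 * t - 2 * a 4 * s + a 5 * r) := by
  apply MvPolynomial.funext
  intro x
  simp only [transv, quinticForm, cubicForm, quadForm, Finset.sum_range_succ, Finset.sum_range_zero,
    Function.iterate_succ, Function.iterate_zero, Function.comp_apply, id_eq, Nat.reduceAdd,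
    Nat.reduceSub, pd_add, pd_zero_term, pd_one_term]
  simp [Nat.factorial, Nat.choose]
  ring

lemma cov2_quinticForm (a : Fin 6 → ℂ) :
    cov2 (quinticForm a) = cubicForm (v₀ a) (v₁ a) (v₂ a) (v₃ a) := by
  rw [cov2, cov1_quinticForm, transv_quintic_quad]; rfl

lemma transv_cubic_cubic (a b c d : ℂ) :
    transv 3 3 2 (cubicForm a b c d) (cubicForm a b c d) =
      quadForm (2 * (a * c - b ^ 2)) (a * d - b * c) (2 * (b * d - c ^ 2)) := by
  apply MvPolynomial.funext
  intro x
  simp only [transv, cubicForm, quadForm, Finset.sum_range_succ, Finset.sum_range_zero,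
    Function.iterate_succ, Function.iterate_zero, Function.comp_apply, id_eq, Nat.reduceAdd,
    Nat.reduceSub, pd_add, pd_zero_term, pd_one_term]
  simp [Nat.factorial, Nat.choose]
  ring

lemma cov3_quinticForm (a : Fin 6 → ℂ) :
    cov3 (quinticForm a) = quadForm (w₀ a) (w₁ a) (w₂ a) := by
  rw [cov3, cov2_quinticForm, transv_cubic_cubic]; rfl

lemma transv_quad_quad (a b c r s t : ℂ) :
    transv 2 2 2 (quadForm a b c) (quadForm r s t) = C (a * t - 2 * b * s + c * r) := by
  apply MvPolynomial.funext
  intro x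
  simp only [transv, quadForm, Finset.sum_range_succ, Finset.sum_range_zero,
    Function.iterate_succ, Function.iterate_zero, Function.comp_apply, id_eq, Nat.reduceAdd,
    Nat.reduceSub, pd_add, pd_zero_term, pd_one_term]
  simp [Nat.factorial, Nat.choose]
  ring

lemma Jinv_quinticForm (a : Fin 6 → ℂ) : Jinv (quinticForm a) = coeffJ a := by
  rw [Jinv, cov1_quinticForm, transv_quad_quad, constantCoeff_C, coeffJ]
  ring

lemma Kinv_quinticForm (a : Fin 6 → ℂ) : Kinv (quinticForm a) = coeffK a := by
  rw [Kinv, cov1_quinticForm, cov3_quinticForm, transv_quad_quad, constantCoeff_C, coeffK]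

/-! ### Coefficients in terms of the roots -/

/-- The binomial coefficients of the quintic with homogeneous roots `l`. -/
def rootCoeffs (l : Fin 5 → Fin 2 → ℂ) : Fin 6 → ℂ :=
  ![l 0 1 * l 1 1 * l 2 1 * l 3 1 * l 4 1,
    -(l 0 0 * l 1 1 * l 2 1 * l 3 1 * l 4 1 + l 0 1 * l 1 0 * l 2 1 * l 3 1 * l 4 1
      + l 0 1 * l 1 1 * l 2 0 * l 3 1 * l 4 1 + l 0 1 * l 1 1 * l 2 1 * l 3 0 * l 4 1
      + l 0 1 * l 1 1 * l 2 1 * l 3 1 * l 4 0) / 5,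
    (l 0 0 * l 1 0 * l 2 1 * l 3 1 * l 4 1 + l 0 0 * l 1 1 * l 2 0 * l 3 1 * l 4 1
      + l 0 0 * l 1 1 * l 2 1 * l 3 0 * l 4 1 + l 0 0 * l 1 1 * l 2 1 * l 3 1 * l 4 0
      + l 0 1 * l 1 0 * l 2 0 * l 3 1 * l 4 1 + l 0 1 * l 1 0 * l 2 1 * l 3 0 * l 4 1
      + l 0 1 * l 1 0 * l 2 1 * l 3 1 * l 4 0 + l 0 1 * l 1 1 * l 2 0 * l 3 0 * l 4 1
      + l 0 1 * l 1 1 * l 2 0 * l 3 1 * l 4 0 + l 0 1 * l 1 1 * l 2 1 * l 3 0 * l 4 0) / 10,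
    -(l 0 1 * l 1 1 * l 2 0 * l 3 0 * l 4 0 + l 0 1 * l 1 0 * l 2 1 * l 3 0 * l 4 0
      + l 0 1 * l 1 0 * l 2 0 * l 3 1 * l 4 0 + l 0 1 * l 1 0 * l 2 0 * l 3 0 * l 4 1
      + l 0 0 * l 1 1 * l 2 1 * l 3 0 * l 4 0 + l 0 0 * l 1 1 * l 2 0 * l 3 1 * l 4 0
      + l 0 0 * l 1 1 * l 2 0 * l 3 0 * l 4 1 + l 0 0 * l 1 0 * l 2 1 * l 3 1 * l 4 0
      + l 0 0 * l 1 0 * l 2 1 * l 3 0 * l 4 1 + l 0 0 * l 1 0 * l 2 0 * l 3 1 * l 4 1) / 10,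
    (l 0 1 * l 1 0 * l 2 0 * l 3 0 * l 4 0 + l 0 0 * l 1 1 * l 2 0 * l 3 0 * l 4 0
      + l 0 0 * l 1 0 * l 2 1 * l 3 0 * l 4 0 + l 0 0 * l 1 0 * l 2 0 * l 3 1 * l 4 0
      + l 0 0 * l 1 0 * l 2 0 * l 3 0 * l 4 1) / 5,
    -(l 0 0 * l 1 0 * l 2 0 * l 3 0 * l 4 0)]

lemma quinticOf_eq_quinticForm (l : Fin 5 → Fin 2 → ℂ) :
    quinticOf l = quinticForm (rootCoeffs l) := by
  apply MvPolynomial.funext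
  intro x
  simp [quinticOf, lin, quinticForm, rootCoeffs, Fin.prod_univ_five]
  ring

/-- The quartic form with plain coefficients `q₀, …, q₄`. -/
def quarticForm (q₀ q₁ q₂ q₃ q₄ : ℂ) : P2 :=
  C q₀ * X 0 ^ 4 * X 1 ^ 0 + C q₁ * X 0 ^ 3 * X 1 ^ 1 + C q₂ * X 0 ^ 2 * X 1 ^ 2
    + C q₃ * X 0 ^ 1 * X 1 ^ 3 + C q₄ * X 0 ^ 0 * X 1 ^ 4

lemma mcoeff_add (i j : ℕ) (F G : P2) : mcoeff i j (F + G) = mcoeff i j F + mcoeff i j G :=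
  coeff_add _ _ _

lemma mcoeff_term (i j m n : ℕ) (a : ℂ) :
    mcoeff i j (C a * X 0 ^ m * X 1 ^ n) = if m = i ∧ n = j then a else 0 := by
  have h : (C a * X 0 ^ m * X 1 ^ n : P2)
      = monomial (Finsupp.single 0 m + Finsupp.single 1 n) a := by
    rw [X_pow_eq_monomial, X_pow_eq_monomial, C_mul_monomial, monomial_mul]
    simp
  rw [h, mcoeff, coeff_monomial]
  congr 1
  simp [Finsupp.ext_iff, Fin.forall_fin_two]

lemma lin_prod_eq_quarticForm (a b c d : Fin 2 → ℂ) :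
    lin a * lin b * lin c * lin d = quarticForm (a 1 * b 1 * c 1 * d 1)
      (-(a 0 * b 1 * c 1 * d 1 + a 1 * b 0 * c 1 * d 1 + a 1 * b 1 * c 0 * d 1
        + a 1 * b 1 * c 1 * d 0))
      (a 0 * b 0 * c 1 * d 1 + a 0 * b 1 * c 0 * d 1 + a 0 * b 1 * c 1 * d 0
        + a 1 * b 0 * c 0 * d 1 + a 1 * b 0 * c 1 * d 0 + a 1 * b 1 * c 0 * d 0)
      (-(a 1 * b 0 * c 0 * d 0 + a 0 * b 1 * c 0 * d 0 + a 0 * b 0 * c 1 * d 0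
        + a 0 * b 0 * c 0 * d 1))
      (a 0 * b 0 * c 0 * d 0) := by
  apply MvPolynomial.funext
  intro x
  simp [lin, quarticForm]
  ring

/-- The invariant `S` of the quartic with homogeneous roots `a, b, c, d`, in brackets. -/
def brS (a b c d : Fin 2 → ℂ) : ℂ :=
  ((br a b * br c d) ^ 2 + (br a c * br b d) ^ 2 + (br a d * br b c) ^ 2) / 24

lemma Sq_lin_prod (a b c d : Fin 2 → ℂ) :
    Sq (lin a * lin b * lin c * lin d) = brS a b c d := by
  rw [lin_prod_eq_quarticForm]
  simp only [Sq, quarticForm, mcoeff_add, mcoeff_term, brS, br]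
  norm_num
  ring

/-- `T` is, up to a constant, the product of the differences of the three numbers
`(ab)(cd)`, `(ac)(db)`, `(ad)(bc)`. -/
lemma Tq_lin_prod (a b c d : Fin 2 → ℂ) :
    Tq (lin a * lin b * lin c * lin d) =
      (br a b * br c d + br a c * br b d) * (br a c * br b d + br a d * br b c)
        * (br a b * br c d - br a d * br b c) / 432 := by
  rw [lin_prod_eq_quarticForm]
  simp only [Tq, quarticForm, mcoeff_add, mcoeff_term, br]
  norm_num
  ring

lemma disc_lin_prod (a b c d : Fin 2 → ℂ) :
    brS a b c d ^ 3 - 27 * Tq (lin a * lin b * lin c * lin d) ^ 2 =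
      (br a b * br c d * (br a c * br b d) * (br a d * br b c)) ^ 2 / 256 := by
  -- the Plücker relation
  have h : br a c * br b d = br a b * br c d + br a d * br b c := by simp only [br]; ring
  rw [Tq_lin_prod, brS, h]
  ring

lemma quarticOmit_zero (l : Fin 5 → Fin 2 → ℂ) :
    quarticOmit l 0 = lin (l 1) * lin (l 2) * lin (l 3) * lin (l 4) := by
  rw [quarticOmit, show Finset.univ.erase (0 : Fin 5) = {1, 2, 3, 4} by decide]
  simp [mul_assoc]

lemma quarticOmit_one (l : Fin 5 → Fin 2 → ℂ) :
    quarticOmit l 1 = lin (l 0) * lin (l 2) * lin (l 3) * lin (l 4) := by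
  rw [quarticOmit, show Finset.univ.erase (1 : Fin 5) = {0, 2, 3, 4} by decide]
  simp [mul_assoc]

lemma quarticOmit_two (l : Fin 5 → Fin 2 → ℂ) :
    quarticOmit l 2 = lin (l 0) * lin (l 1) * lin (l 3) * lin (l 4) := by
  rw [quarticOmit, show Finset.univ.erase (2 : Fin 5) = {0, 1, 3, 4} by decide]
  simp [mul_assoc]

lemma quarticOmit_three (l : Fin 5 → Fin 2 → ℂ) :
    quarticOmit l 3 = lin (l 0) * lin (l 1) * lin (l 2) * lin (l 4) := by
  rw [quarticOmit, show Finset.univ.erase (3 : Fin 5) = {0, 1, 2, 4} by decide]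
  simp [mul_assoc]

lemma quarticOmit_four (l : Fin 5 → Fin 2 → ℂ) :
    quarticOmit l 4 = lin (l 0) * lin (l 1) * lin (l 2) * lin (l 3) := by
  rw [quarticOmit, show Finset.univ.erase (4 : Fin 5) = {0, 1, 2, 3} by decide]
  simp [mul_assoc]

/-! ### Factorization of `B₁` -/

/-- The product of the brackets of all pairs of roots; its square is the discriminant. -/
def brProd (l : Fin 5 → Fin 2 → ℂ) : ℂ :=
  br (l 0) (l 1) * br (l 0) (l 2) * br (l 0) (l 3) * br (l 0) (l 4) * br (l 1) (l 2)
    * br (l 1) (l 3) * br (l 1) (l 4) * br (l 2) (l 3) * br (l 2) (l 4) * br (l 3) (l 4)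

/-- The symmetric function `Σᵢ S(Qᵢ)³ ∏_{j ≠ i} (λᵢλⱼ)²` of the roots. -/
def brSum (l : Fin 5 → Fin 2 → ℂ) : ℂ :=
  brS (l 1) (l 2) (l 3) (l 4) ^ 3
      * (br (l 0) (l 1) * br (l 0) (l 2) * br (l 0) (l 3) * br (l 0) (l 4)) ^ 2
    + brS (l 0) (l 2) (l 3) (l 4) ^ 3
      * (br (l 0) (l 1) * br (l 1) (l 2) * br (l 1) (l 3) * br (l 1) (l 4)) ^ 2
    + brS (l 0) (l 1) (l 3) (l 4) ^ 3
      * (br (l 0) (l 2) * br (l 1) (l 2) * br (l 2) (l 3) * br (l 2) (l 4)) ^ 2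
    + brS (l 0) (l 1) (l 2) (l 4) ^ 3
      * (br (l 0) (l 3) * br (l 1) (l 3) * br (l 2) (l 3) * br (l 3) (l 4)) ^ 2
    + brS (l 0) (l 1) (l 2) (l 3) ^ 3
      * (br (l 0) (l 4) * br (l 1) (l 4) * br (l 2) (l 4) * br (l 3) (l 4)) ^ 2

/-- The coefficient of `z⁴` in a product of five linear polynomials in `z`. -/
lemma coeff_four_prod_linear (d s : Fin 5 → ℂ) :
    (∏ i : Fin 5, (Polynomial.C (d i) * Polynomial.X - Polynomial.C (s i))).coeff 4 =
      -(s 0 * d 1 * d 2 * d 3 * d 4 + d 0 * s 1 * d 2 * d 3 * d 4 + d 0 * d 1 * s 2 * d 3 * d 4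
        + d 0 * d 1 * d 2 * s 3 * d 4 + d 0 * d 1 * d 2 * d 3 * s 4) := by
  have h : (∏ i : Fin 5, (Polynomial.C (d i) * Polynomial.X - Polynomial.C (s i))) =
      Polynomial.C (d 0 * d 1 * d 2 * d 3 * d 4) * Polynomial.X ^ 5
      + Polynomial.C (-(s 0 * d 1 * d 2 * d 3 * d 4 + d 0 * s 1 * d 2 * d 3 * d 4
        + d 0 * d 1 * s 2 * d 3 * d 4 + d 0 * d 1 * d 2 * s 3 * d 4
        + d 0 * d 1 * d 2 * d 3 * s 4)) * Polynomial.X ^ 4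
      + Polynomial.C (s 0 * s 1 * d 2 * d 3 * d 4 + s 0 * d 1 * s 2 * d 3 * d 4
        + s 0 * d 1 * d 2 * s 3 * d 4 + s 0 * d 1 * d 2 * d 3 * s 4 + d 0 * s 1 * s 2 * d 3 * d 4
        + d 0 * s 1 * d 2 * s 3 * d 4 + d 0 * s 1 * d 2 * d 3 * s 4 + d 0 * d 1 * s 2 * s 3 * d 4
        + d 0 * d 1 * s 2 * d 3 * s 4 + d 0 * d 1 * d 2 * s 3 * s 4) * Polynomial.X ^ 3
      + Polynomial.C (-(d 0 * d 1 * s 2 * s 3 * s 4 + d 0 * s 1 * d 2 * s 3 * s 4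
        + d 0 * s 1 * s 2 * d 3 * s 4 + d 0 * s 1 * s 2 * s 3 * d 4 + s 0 * d 1 * d 2 * s 3 * s 4
        + s 0 * d 1 * s 2 * d 3 * s 4 + s 0 * d 1 * s 2 * s 3 * d 4 + s 0 * s 1 * d 2 * d 3 * s 4
        + s 0 * s 1 * d 2 * s 3 * d 4 + s 0 * s 1 * s 2 * d 3 * d 4)) * Polynomial.X ^ 2
      + Polynomial.C (d 0 * s 1 * s 2 * s 3 * s 4 + s 0 * d 1 * s 2 * s 3 * s 4
        + s 0 * s 1 * d 2 * s 3 * s 4 + s 0 * s 1 * s 2 * d 3 * s 4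
        + s 0 * s 1 * s 2 * s 3 * d 4) * Polynomial.X ^ 1
      + Polynomial.C (-(s 0 * s 1 * s 2 * s 3 * s 4)) * Polynomial.X ^ 0 := by
    simp only [Fin.prod_univ_five, map_add, map_mul, map_neg]
    ring
  rw [h]
  simp only [Polynomial.coeff_add, Polynomial.coeff_C_mul, Polynomial.coeff_X_pow]
  norm_num

lemma Binv_one_eq (l : Fin 5 → Fin 2 → ℂ) :
    Binv l 1 = -(1 / 2 ^ 32) * (brProd l ^ 2) ^ 2 * brSum l := by
  rw [Binv, Rbar, show 5 - 1 = 4 from rfl,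
    coeff_four_prod_linear (fun i => Sq (quarticOmit l i) ^ 3 - 27 * Tq (quarticOmit l i) ^ 2)
      (fun i => Sq (quarticOmit l i) ^ 3)]
  simp only [quarticOmit_zero, quarticOmit_one, quarticOmit_two, quarticOmit_three,
    quarticOmit_four, Sq_lin_prod, disc_lin_prod, brProd, brSum]
  ring

/-! ### Invariance under shears and under swapping the variables -/

/-- The shear `(p, q) ↦ (p, q + tp)` applied to all roots. -/
def shear (t : ℂ) (l : Fin 5 → Fin 2 → ℂ) : Fin 5 → Fin 2 → ℂ :=
  fun i => ![l i 0, l i 1 + t * l i 0]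

/-- The swap `(p, q) ↦ (q, p)` applied to all roots. -/
def swapRoots (l : Fin 5 → Fin 2 → ℂ) : Fin 5 → Fin 2 → ℂ := fun i => ![l i 1, l i 0]

/-- The effect of the substitution `x₂ ↦ x₂ - t x₁` on the binomial coefficients of a quintic. -/
def shearCoeffs (t : ℂ) (a : Fin 6 → ℂ) : Fin 6 → ℂ :=
  ![a 0 - 5 * t * a 1 + 10 * t ^ 2 * a 2 - 10 * t ^ 3 * a 3 + 5 * t ^ 4 * a 4 - t ^ 5 * a 5,
    a 1 - 4 * t * a 2 + 6 * t ^ 2 * a 3 - 4 * t ^ 3 * a 4 + t ^ 4 * a 5,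
    a 2 - 3 * t * a 3 + 3 * t ^ 2 * a 4 - t ^ 3 * a 5,
    a 3 - 2 * t * a 4 + t ^ 2 * a 5,
    a 4 - t * a 5,
    a 5]

lemma rootCoeffs_shear (t : ℂ) (l : Fin 5 → Fin 2 → ℂ) :
    rootCoeffs (shear t l) = shearCoeffs t (rootCoeffs l) := by
  funext k
  fin_cases k <;> simp [rootCoeffs, shear, shearCoeffs] <;> ring

lemma rootCoeffs_swapRoots (l : Fin 5 → Fin 2 → ℂ) :
    rootCoeffs (swapRoots l) = fun k => -rootCoeffs l k.rev := by
  funext k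
  fin_cases k <;> simp [rootCoeffs, swapRoots, Fin.rev] <;> ring

section ShearCoeffs

variable (t : ℂ) (a : Fin 6 → ℂ)

lemma u₀_shearCoeffs : u₀ (shearCoeffs t a) = u₀ a - 2 * t * u₁ a + t ^ 2 * u₂ a := by
  simp [u₀, u₁, u₂, shearCoeffs]; ring

lemma u₁_shearCoeffs : u₁ (shearCoeffs t a) = u₁ a - t * u₂ a := by
  simp [u₁, u₂, shearCoeffs]; ring

lemma u₂_shearCoeffs : u₂ (shearCoeffs t a) = u₂ a := by
  simp [u₂, shearCoeffs]; ring

lemma v₀_shearCoeffs :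
    v₀ (shearCoeffs t a) = v₀ a - 3 * t * v₁ a + 3 * t ^ 2 * v₂ a - t ^ 3 * v₃ a := by
  simp only [v₀, v₁, v₂, v₃, u₀_shearCoeffs, u₁_shearCoeffs, u₂_shearCoeffs]
  simp [shearCoeffs]; ring

lemma v₁_shearCoeffs : v₁ (shearCoeffs t a) = v₁ a - 2 * t * v₂ a + t ^ 2 * v₃ a := by
  simp only [v₁, v₂, v₃, u₀_shearCoeffs, u₁_shearCoeffs, u₂_shearCoeffs]
  simp [shearCoeffs]; ring

lemma v₂_shearCoeffs : v₂ (shearCoeffs t a) = v₂ a - t * v₃ a := by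
  simp only [v₂, v₃, u₀_shearCoeffs, u₁_shearCoeffs, u₂_shearCoeffs]
  simp [shearCoeffs]; ring

lemma v₃_shearCoeffs : v₃ (shearCoeffs t a) = v₃ a := by
  simp only [v₃, u₀_shearCoeffs, u₁_shearCoeffs, u₂_shearCoeffs]
  simp [shearCoeffs]; ring

lemma coeffJ_shearCoeffs : coeffJ (shearCoeffs t a) = coeffJ a := by
  simp only [coeffJ, u₀_shearCoeffs, u₁_shearCoeffs, u₂_shearCoeffs]; ring

lemma coeffK_shearCoeffs : coeffK (shearCoeffs t a) = coeffK a := by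
  simp only [coeffK, w₀, w₁, w₂, u₀_shearCoeffs, u₁_shearCoeffs, u₂_shearCoeffs,
    v₀_shearCoeffs, v₁_shearCoeffs, v₂_shearCoeffs, v₃_shearCoeffs]
  ring

end ShearCoeffs

lemma u_neg_rev (a : Fin 6 → ℂ) :
    u₀ (fun k => -a k.rev) = u₂ a ∧ u₁ (fun k => -a k.rev) = u₁ a
      ∧ u₂ (fun k => -a k.rev) = u₀ a := by
  refine ⟨?_, ?_, ?_⟩ <;> simp [u₀, u₁, u₂, Fin.rev] <;> ring

lemma v_neg_rev (a : Fin 6 → ℂ) :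
    v₀ (fun k => -a k.rev) = -v₃ a ∧ v₁ (fun k => -a k.rev) = -v₂ a
      ∧ v₂ (fun k => -a k.rev) = -v₁ a ∧ v₃ (fun k => -a k.rev) = -v₀ a := by
  obtain ⟨h₀, h₁, h₂⟩ := u_neg_rev a
  refine ⟨?_, ?_, ?_, ?_⟩ <;> simp only [v₀, v₁, v₂, v₃, h₀, h₁, h₂] <;> simp [Fin.rev] <;> ring

lemma coeffJ_neg_rev (a : Fin 6 → ℂ) : coeffJ (fun k => -a k.rev) = coeffJ a := by
  obtain ⟨h₀, h₁, h₂⟩ := u_neg_rev a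
  simp only [coeffJ, h₀, h₁, h₂]; ring

lemma coeffK_neg_rev (a : Fin 6 → ℂ) : coeffK (fun k => -a k.rev) = coeffK a := by
  obtain ⟨h₀, h₁, h₂⟩ := u_neg_rev a
  obtain ⟨k₀, k₁, k₂, k₃⟩ := v_neg_rev a
  simp only [coeffK, w₀, w₁, w₂, h₀, h₁, h₂, k₀, k₁, k₂, k₃]; ring

lemma br_shear (t : ℂ) (l : Fin 5 → Fin 2 → ℂ) (i j : Fin 5) :
    br (shear t l i) (shear t l j) = br (l i) (l j) := by
  simp [br, shear]; ring

lemma br_swapRoots (l : Fin 5 → Fin 2 → ℂ) (i j : Fin 5) :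
    br (swapRoots l i) (swapRoots l j) = -br (l i) (l j) := by
  simp [br, swapRoots]

/-! ### The two bracket identities -/

/-- The expressions of the discriminant and of `brSum` through `J` and `K`. -/
def RootIdentities (l : Fin 5 → Fin 2 → ℂ) : Prop :=
  brProd l ^ 2 = 5 ^ 5 * (coeffJ (rootCoeffs l) ^ 2 - 128 * coeffK (rootCoeffs l)) ∧
  brSum l = -(5 ^ 6 / 6 ^ 3) * (28 * coeffK (rootCoeffs l) - coeffJ (rootCoeffs l) ^ 2)

lemma RootIdentities.of_shear {t : ℂ} {l : Fin 5 → Fin 2 → ℂ}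
    (h : RootIdentities (shear t l)) : RootIdentities l := by
  simpa only [RootIdentities, rootCoeffs_shear, coeffJ_shearCoeffs, coeffK_shearCoeffs, brProd,
    brSum, brS, br_shear] using h

lemma RootIdentities.of_swapRoots {l : Fin 5 → Fin 2 → ℂ}
    (h : RootIdentities (swapRoots l)) : RootIdentities l := by
  have h₁ : brProd (swapRoots l) = brProd l := by
    simp only [brProd, br_swapRoots]; ring
  have h₂ : brSum (swapRoots l) = brSum l := by
    simp only [brSum, brS, br_swapRoots, mul_neg, neg_mul, neg_neg]
  simpa only [RootIdentities, rootCoeffs_swapRoots, coeffJ_neg_rev, coeffK_neg_rev, h₁, h₂] using h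

set_option maxRecDepth 100000 in
set_option maxHeartbeats 4000000 in
/-- The normal form with roots `λ₄ = (p, 0)` and `λ₅ = (0, q)`. -/
lemma rootIdentities_of_axes (l : Fin 5 → Fin 2 → ℂ) (h₃ : l 3 1 = 0) (h₄ : l 4 0 = 0) :
    RootIdentities l := by
  simp only [RootIdentities, brProd, brSum, brS, br, coeffJ, coeffK, w₀, w₁, w₂, v₀, v₁, v₂, v₃,
    u₀, u₁, u₂, rootCoeffs, Matrix.cons_val, h₃, h₄, mul_zero, zero_mul, add_zero, zero_add,
    sub_zero, zero_sub, neg_zero]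
  constructor <;> ring

set_option maxRecDepth 100000 in
set_option maxHeartbeats 4000000 in
/-- The degenerate normal form in which `λ₄` and `λ₅` are both multiples of `(0, 1)`. -/
lemma rootIdentities_of_double (l : Fin 5 → Fin 2 → ℂ) (h₃ : l 3 0 = 0) (h₄ : l 4 0 = 0) :
    RootIdentities l := by
  simp only [RootIdentities, brProd, brSum, brS, br, coeffJ, coeffK, w₀, w₁, w₂, v₀, v₁, v₂, v₃,
    u₀, u₁, u₂, rootCoeffs, Matrix.cons_val, h₃, h₄, mul_zero, zero_mul, add_zero, zero_add,
    sub_zero, zero_sub, neg_zero, zero_div]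
  constructor <;> ring

lemma rootIdentities_of_last (l : Fin 5 → Fin 2 → ℂ) (h₄ : l 4 0 = 0) : RootIdentities l := by
  by_cases h₃ : l 3 0 = 0
  · exact rootIdentities_of_double l h₃ h₄
  · apply RootIdentities.of_shear (t := -(l 3 1 / l 3 0))
    apply rootIdentities_of_axes
    · simp [shear, h₃]
    · simp [shear, h₄]

lemma rootIdentities (l : Fin 5 → Fin 2 → ℂ) : RootIdentities l := by
  by_cases h₄ : l 4 0 = 0
  · exact rootIdentities_of_last l h₄
  · apply RootIdentities.of_shear (t := -(l 4 1 / l 4 0))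
    apply RootIdentities.of_swapRoots
    apply rootIdentities_of_last
    simp [shear, swapRoots, h₄]

/-- `B₁(F) = (5¹⁶/(2³⁵·3³))(2¹⁶·7·K³ − 2¹⁰·23·K²J² + 2²·71·KJ⁴ − J⁶)`. -/
theorem binv_one_formula (l : Fin 5 → Fin 2 → ℂ) :
    Binv l 1 = 5 ^ 16 / (2 ^ 35 * 3 ^ 3) *
      (2 ^ 16 * 7 * Kinv (quinticOf l) ^ 3
        - 2 ^ 10 * 23 * Kinv (quinticOf l) ^ 2 * Jinv (quinticOf l) ^ 2
        + 2 ^ 2 * 71 * Kinv (quinticOf l) * Jinv (quinticOf l) ^ 4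
        - Jinv (quinticOf l) ^ 6) := by
  obtain ⟨hd, hs⟩ := rootIdentities l
  rw [Binv_one_eq, hd, hs, quinticOf_eq_quinticForm, Jinv_quinticForm, Kinv_quinticForm]
  ring

end
end

section
/- For every binary quintic F over ℂ, B₃(F) = (5¹⁶/(2²⁵·3⁹))·(−2¹¹·5⁴·L² − 2⁹·3·5³·LKJ + 2·5³·11·LJ³ + 2⁹·17·K³ − 2²·23·37·K²J² + 3⁵·K·J⁴ − 2·J⁶), where J = J(F), K = K(F), L = L(F). -/
/-!
Both sides are polynomials in the five homogeneous roots `λᵢ` that transform in the same way: under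
`λᵢ ↦ cᵢ • g λᵢ` they are multiplied by `(∏ cᵢ)²⁴ (det g)⁶⁰`. If enough brackets of the roots are
nonzero, the roots can therefore be taken to be `∞, 0, 1, s, t`, and the claim becomes an identity
of polynomials in `p = s + t` and `q = st`, which is checked by expansion. The general case follows
by density: along a suitable line through an arbitrary configuration of roots, all but finitely
many points are in general position.

For the left-hand side the transformation law is read off from bracket expressions of the quartic
invariants, `S = (1/24) ∑ (ab)²(cd)²` over the three splittings of the roots into pairs, and
`S³ - 27T² = (1/256) ∏ (ab)²` (`quartic_invariants`). For the right-hand side, transvectants are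
computed on the sequences of binomially normalised coefficients (`transv_form`), and each covariant
entering `J`, `K`, `L` is shown to commute with linear substitutions up to a power of the
determinant (`cc1_subst`, `pol2_subst`, `cc3_subst`).
-/

noncomputable section

open MvPolynomial

/-! ### Transvectants on coefficient sequences -/

/-- The binary form `∑ (n choose i) aᵢ x₁^(n-i) x₂^i` of order `n`. The recursion is the Pascal
rule; only `a₀, …, aₙ` matter. -/
def form : ℕ → (ℕ → ℂ) → P2
  | 0, a => C (a 0)
  | n + 1, a => X 0 * form n a + X 1 * form n (fun i => a (i + 1))

lemma pd_zero_form (n : ℕ) (a : ℕ → ℂ) : pd 0 (form (n + 1) a) = C (n + 1 : ℂ) * form n a := by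
  induction n generalizing a with
  | zero => simp [form, pd]
  | succ n ih =>
    have h1 := ih a
    have h2 := ih (fun i => a (i + 1))
    rw [form]
    simp only [pd, map_add, pderiv_mul, pderiv_X_self, pderiv_X_of_ne one_ne_zero] at h1 h2 ⊢
    rw [h1, h2, form]
    push_cast
    simp only [map_add, map_one]
    ring

lemma pd_one_form (n : ℕ) (a : ℕ → ℂ) :
    pd 1 (form (n + 1) a) = C (n + 1 : ℂ) * form n (fun i => a (i + 1)) := by
  induction n generalizing a with
  | zero => simp [form, pd]
  | succ n ih =>
    have h1 := ih a
    have h2 := ih (fun i => a (i + 1))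
    rw [form]
    simp only [pd, map_add, pderiv_mul, pderiv_X_self, pderiv_X_of_ne zero_ne_one] at h1 h2 ⊢
    rw [h1, h2, show form (n + 1) (fun i => a (i + 1)) = X 0 * form n (fun i => a (i + 1))
      + X 1 * form n (fun i => a (i + 1 + 1)) from rfl]
    push_cast
    simp only [map_add, map_one]
    ring

lemma pd_C_mul (i : Fin 2) (c : ℂ) (F : P2) : pd i (C c * F) = C c * pd i F := by
  simp [pd]

lemma pd_iterate_C_mul (i : Fin 2) (j : ℕ) (c : ℂ) (F : P2) :
    (pd i)^[j] (C c * F) = C c * (pd i)^[j] F := by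
  induction j generalizing F with
  | zero => rfl
  | succ j ih => rw [Function.iterate_succ_apply, pd_C_mul, ih, Function.iterate_succ_apply]

lemma fac_ne (n : ℕ) : (n.factorial : ℂ) ≠ 0 := by exact_mod_cast n.factorial_ne_zero

lemma pd_zero_iterate_form (n j : ℕ) (a : ℕ → ℂ) :
    (pd 0)^[j] (form (n + j) a) = C (((n + j).factorial : ℂ) / n.factorial) * form n a := by
  induction j with
  | zero => simp [div_self (fac_ne n)]
  | succ j ih =>
    rw [Function.iterate_succ_apply, ← add_assoc, pd_zero_form, pd_iterate_C_mul, ih, ← mul_assoc,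
      ← C_mul, Nat.factorial_succ]
    push_cast
    rw [mul_div_assoc]

lemma pd_one_iterate_form (n j : ℕ) (a : ℕ → ℂ) :
    (pd 1)^[j] (form (n + j) a)
      = C (((n + j).factorial : ℂ) / n.factorial) * form n (fun i => a (i + j)) := by
  induction j generalizing a with
  | zero => simp [div_self (fac_ne n)]
  | succ j ih =>
    rw [Function.iterate_succ_apply, ← add_assoc, pd_one_form, pd_iterate_C_mul, ih, ← mul_assoc,
      ← C_mul, Nat.factorial_succ]
    push_cast
    rw [mul_div_assoc]
    simp only [add_assoc]

/-- In normalised coefficients the factorials in the definition of the transvectant cancel. -/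
lemma transv_form (p q k : ℕ) (a b : ℕ → ℂ) :
    transv (p + k) (q + k) k (form (p + k) a) (form (q + k) b)
      = ∑ i ∈ Finset.range (k + 1), C ((-1 : ℂ) ^ i * (Nat.choose k i : ℂ)) *
          form p (fun n => a (n + i)) * form q (fun n => b (n + (k - i))) := by
  rw [transv, Finset.mul_sum]
  refine Finset.sum_congr rfl fun i hi => ?_
  have hik : i ≤ k := Nat.lt_succ_iff.mp (Finset.mem_range.mp hi)
  have hp : p + k = p + i + (k - i) := by omega
  have hq : q + k = q + i + (k - i) := by omega
  have e1 : (pd 1)^[i] ((pd 0)^[k - i] (form (p + k) a))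
      = C (((p + k).factorial : ℂ) / p.factorial) * form p (fun n => a (n + i)) := by
    rw [hp, pd_zero_iterate_form, pd_iterate_C_mul, pd_one_iterate_form, ← mul_assoc, ← C_mul,
      div_mul_div_cancel₀ (fac_ne _)]
  have e2 : (pd 0)^[i] ((pd 1)^[k - i] (form (q + k) b))
      = C (((q + k).factorial : ℂ) / q.factorial) * form q (fun n => b (n + (k - i))) := by
    rw [hq, pd_one_iterate_form, pd_iterate_C_mul, pd_zero_iterate_form, ← mul_assoc, ← C_mul,
      div_mul_div_cancel₀ (fac_ne _)]
  have h : (C ((p.factorial : ℂ) * q.factorial / ((p + k).factorial * (q + k).factorial)) : P2)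
      * C (((p + k).factorial : ℂ) / p.factorial) * C (((q + k).factorial : ℂ) / q.factorial)
        = 1 := by
    rw [← C_mul, ← C_mul, ← C_1]
    congr 1
    have := fac_ne p
    have := fac_ne q
    have := fac_ne (p + k)
    have := fac_ne (q + k)
    field_simp
  rw [e1, e2, Nat.add_sub_cancel, Nat.add_sub_cancel]
  linear_combination (C ((-1 : ℂ) ^ i * (Nat.choose k i : ℂ)) * form p (fun n => a (n + i))
    * form q (fun n => b (n + (k - i)))) * h

/-- Normalised coefficients of the quadratic covariant `C₁ = (F,F)₄` of the quintic with normalised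
coefficients `a`. -/
def cc1 (a : ℕ → ℂ) : ℕ → ℂ
  | 0 => 2 * (a 0 * a 4 - 4 * a 1 * a 3 + 3 * a 2 ^ 2)
  | 1 => a 0 * a 5 - 3 * a 1 * a 4 + 2 * a 2 * a 3
  | _ => 2 * (a 1 * a 5 - 4 * a 2 * a 4 + 3 * a 3 ^ 2)

/-- Normalised coefficients of the transvectant `(G,Q)₂` of a form `G` with coefficients `a` and a
quadratic form `Q` with coefficients `q`. -/
def pol2 (q a : ℕ → ℂ) : ℕ → ℂ := fun i => a i * q 2 - 2 * a (i + 1) * q 1 + a (i + 2) * q 0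

/-- Normalised coefficients of the transvectant `(G,G)₂` of the cubic form `G` with coefficients
`c`. -/
def cc3 (c : ℕ → ℂ) : ℕ → ℂ
  | 0 => 2 * (c 0 * c 2 - c 1 ^ 2)
  | 1 => c 0 * c 3 - c 1 * c 2
  | _ => 2 * (c 1 * c 3 - c 2 ^ 2)

lemma cov1_form (a : ℕ → ℂ) : cov1 (form 5 a) = form 2 (cc1 a) := by
  rw [cov1, transv_form 1 1 4]
  simp [Finset.sum_range_succ, form, cc1, Nat.choose, map_ofNat]
  ring

lemma cov2_form (a : ℕ → ℂ) : cov2 (form 5 a) = form 3 (pol2 (cc1 a) a) := by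
  rw [cov2, cov1_form, transv_form 3 0 2]
  generalize cc1 a = q
  simp [Finset.sum_range_succ, form, pol2, Nat.choose, map_ofNat]
  ring

lemma cov3_form (a : ℕ → ℂ) : cov3 (form 5 a) = form 2 (cc3 (pol2 (cc1 a) a)) := by
  rw [cov3, cov2_form, transv_form 1 1 2]
  generalize pol2 (cc1 a) a = c
  simp [Finset.sum_range_succ, form, cc3, Nat.choose, map_ofNat]
  ring

lemma transv_form_two (q r : ℕ → ℂ) :
    constantCoeff (transv 2 2 2 (form 2 q) (form 2 r)) = pol2 q r 0 := by
  rw [transv_form 0 0 2]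
  simp [Finset.sum_range_succ, form, pol2, Nat.choose, map_ofNat]
  ring

/-- The invariant `J` of a quintic in terms of its normalised coefficients. -/
def Jc (a : ℕ → ℂ) : ℂ := -(1 / 2) * pol2 (cc1 a) (cc1 a) 0

/-- The invariant `K` of a quintic in terms of its normalised coefficients. -/
def Kc (a : ℕ → ℂ) : ℂ := 1 / 8 * pol2 (cc1 a) (cc3 (pol2 (cc1 a) a)) 0

/-- The invariant `L` of a quintic in terms of its normalised coefficients. -/
def Lc (a : ℕ → ℂ) : ℂ := 1 / 96 * pol2 (cc3 (pol2 (cc1 a) a)) (cc3 (pol2 (cc1 a) a)) 0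

lemma Jinv_form (a : ℕ → ℂ) : Jinv (form 5 a) = Jc a := by
  rw [Jinv, cov1_form, transv_form_two, Jc]

lemma Kinv_form (a : ℕ → ℂ) : Kinv (form 5 a) = Kc a := by
  rw [Kinv, cov1_form, cov3_form, transv_form_two, Kc]

lemma Linv_form (a : ℕ → ℂ) : Linv (form 5 a) = Lc a := by
  rw [Linv, cov3_form, transv_form_two, Lc]

/-! ### Behaviour of the covariants under linear substitution -/

/-- One polarisation step: contraction of a form with the vector `(p, r)`, on normalised
coefficients. -/
def step (p r : ℂ) (a : ℕ → ℂ) : ℕ → ℂ := fun i => p * a i + r * a (i + 1)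

/-- Normalised coefficients of `G(p x₁ + q x₂, r x₁ + s x₂)`, where `G` has order `n` and normalised
coefficients `a`: the `k`-th one is the full polarisation of `G` at `n - k` copies of `(p, r)` and
`k` copies of `(q, s)`. -/
def subst (n : ℕ) (p q r s : ℂ) (a : ℕ → ℂ) : ℕ → ℂ :=
  fun k => (step p r)^[n - k] ((step q s)^[k] a) 0

lemma cc1_subst (c p q r s : ℂ) (a b : ℕ → ℂ) (hb : ∀ i < 6, b i = c * subst 5 p q r s a i) :
    ∀ i < 3, cc1 b i = c ^ 2 * (p * s - q * r) ^ 4 * subst 2 p q r s (cc1 a) i := by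
  intro i hi
  have h0 := hb 0 (by norm_num)
  have h1 := hb 1 (by norm_num)
  have h2 := hb 2 (by norm_num)
  have h3 := hb 3 (by norm_num)
  have h4 := hb 4 (by norm_num)
  have h5 := hb 5 (by norm_num)
  interval_cases i <;>
  simp only [cc1, h0, h1, h2, h3, h4, h5] <;>
  simp [subst, step, cc1, Function.iterate_succ_apply'] <;>
  ring

lemma pol2_subst (c e p q r s : ℂ) (a b u v : ℕ → ℂ)
    (hb : ∀ i < 6, b i = c * subst 5 p q r s a i) (hv : ∀ i < 3, v i = e * subst 2 p q r s u i) :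
    ∀ i < 4, pol2 v b i = c * e * (p * s - q * r) ^ 2 * subst 3 p q r s (pol2 u a) i := by
  intro i hi
  have h0 := hb 0 (by norm_num)
  have h1 := hb 1 (by norm_num)
  have h2 := hb 2 (by norm_num)
  have h3 := hb 3 (by norm_num)
  have h4 := hb 4 (by norm_num)
  have h5 := hb 5 (by norm_num)
  have k0 := hv 0 (by norm_num)
  have k1 := hv 1 (by norm_num)
  have k2 := hv 2 (by norm_num)
  interval_cases i <;>
  simp only [pol2, zero_add, Nat.reduceAdd, h0, h1, h2, h3, h4, h5, k0, k1, k2] <;>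
  simp [subst, step, pol2, Function.iterate_succ_apply'] <;>
  ring

lemma cc3_subst (c p q r s : ℂ) (a b : ℕ → ℂ) (hb : ∀ i < 4, b i = c * subst 3 p q r s a i) :
    ∀ i < 3, cc3 b i = c ^ 2 * (p * s - q * r) ^ 2 * subst 2 p q r s (cc3 a) i := by
  intro i hi
  have h0 := hb 0 (by norm_num)
  have h1 := hb 1 (by norm_num)
  have h2 := hb 2 (by norm_num)
  have h3 := hb 3 (by norm_num)
  interval_cases i <;>
  simp only [cc3, h0, h1, h2, h3] <;>
  simp [subst, step, cc3, Function.iterate_succ_apply'] <;>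
  ring

lemma pol2_two_subst (c e p q r s : ℂ) (a b u v : ℕ → ℂ)
    (hb : ∀ i < 3, b i = c * subst 2 p q r s a i) (hv : ∀ i < 3, v i = e * subst 2 p q r s u i) :
    pol2 v b 0 = c * e * (p * s - q * r) ^ 2 * pol2 u a 0 := by
  have h0 := hb 0 (by norm_num)
  have h1 := hb 1 (by norm_num)
  have h2 := hb 2 (by norm_num)
  have k0 := hv 0 (by norm_num)
  have k1 := hv 1 (by norm_num)
  have k2 := hv 2 (by norm_num)
  simp only [pol2, zero_add, h0, h1, h2, k0, k1, k2]
  simp [subst, step, Function.iterate_succ_apply']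
  ring

lemma Jc_subst {c p q r s : ℂ} {a b : ℕ → ℂ}
    (hb : ∀ i < 6, b i = c * subst 5 p q r s a i) :
    Jc b = c ^ 4 * (p * s - q * r) ^ 10 * Jc a := by
  have h1 := cc1_subst c p q r s a b hb
  rw [Jc, Jc, pol2_two_subst _ _ p q r s _ _ _ _ h1 h1]
  ring

lemma Kc_subst {c p q r s : ℂ} {a b : ℕ → ℂ}
    (hb : ∀ i < 6, b i = c * subst 5 p q r s a i) :
    Kc b = c ^ 8 * (p * s - q * r) ^ 20 * Kc a := by
  have h1 := cc1_subst c p q r s a b hb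
  have h3 := cc3_subst _ p q r s _ _ (pol2_subst _ _ p q r s a b _ _ hb h1)
  rw [Kc, Kc, pol2_two_subst _ _ p q r s _ _ _ _ h3 h1]
  ring

lemma Lc_subst {c p q r s : ℂ} {a b : ℕ → ℂ}
    (hb : ∀ i < 6, b i = c * subst 5 p q r s a i) :
    Lc b = c ^ 12 * (p * s - q * r) ^ 30 * Lc a := by
  have h1 := cc1_subst c p q r s a b hb
  have h3 := cc3_subst _ p q r s _ _ (pol2_subst _ _ p q r s a b _ _ hb h1)
  rw [Lc, Lc, pol2_two_subst _ _ p q r s _ _ _ _ h3 h3]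
  ring

/-! ### Coefficients and quartic invariants in terms of the roots -/

/-- Coefficients (without binomial factors) of the product of `(xv)` with the form whose
coefficients are `e`. -/
def mulLin (v : Fin 2 → ℂ) (e : ℕ → ℂ) : ℕ → ℂ
  | 0 => v 1 * e 0
  | k + 1 => v 1 * e (k + 1) - v 0 * e k

/-- Normalised coefficients of the quintic with homogeneous roots `l`. -/
def rootCoeff (l : Fin 5 → Fin 2 → ℂ) (k : ℕ) : ℂ :=
  mulLin (l 0) (mulLin (l 1) (mulLin (l 2) (mulLin (l 3) (mulLin (l 4) (Pi.single 0 1))))) k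
    / (Nat.choose 5 k : ℂ)

lemma quinticOf_eq_form (l : Fin 5 → Fin 2 → ℂ) : quinticOf l = form 5 (rootCoeff l) := by
  set e := mulLin (l 0) (mulLin (l 1) (mulLin (l 2) (mulLin (l 3) (mulLin (l 4)
    (Pi.single 0 1))))) with he
  have key : ∀ x k : ℂ, k ≠ 0 → (C k * C (x / k) : P2) = C x := fun x k hk => by
    rw [← C_mul, mul_div_cancel₀ x hk]
  have h0 : rootCoeff l 0 = e 0 := by simp [rootCoeff, he]
  have h1 : (5 * C (rootCoeff l 1) : P2) = C (e 1) := by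
    rw [← map_ofNat C 5]; exact key _ _ (by norm_num)
  have h2 : (10 * C (rootCoeff l 2) : P2) = C (e 2) := by
    rw [← map_ofNat C 10]; exact key _ _ (by norm_num)
  have h3 : (10 * C (rootCoeff l 3) : P2) = C (e 3) := by
    rw [← map_ofNat C 10]; exact key _ _ (by norm_num)
  have h4 : (5 * C (rootCoeff l 4) : P2) = C (e 4) := by
    rw [← map_ofNat C 5]; exact key _ _ (by norm_num)
  have h5 : rootCoeff l 5 = e 5 := by simp [rootCoeff, he]
  have hf : form 5 (rootCoeff l) = C (e 0) * X 0 ^ 5 + C (e 1) * X 0 ^ 4 * X 1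
      + C (e 2) * X 0 ^ 3 * X 1 ^ 2 + C (e 3) * X 0 ^ 2 * X 1 ^ 3 + C (e 4) * X 0 * X 1 ^ 4
      + C (e 5) * X 1 ^ 5 := by
    rw [← h0, ← h1, ← h2, ← h3, ← h4, ← h5]
    simp only [form, zero_add, Nat.reduceAdd]
    ring
  rw [hf, quinticOf, Fin.prod_univ_five]
  simp [lin, he, mulLin]
  ring

lemma mcoeff_monomial (i j m n : ℕ) (c : ℂ) :
    mcoeff i j (C c * X 0 ^ m * X 1 ^ n) = if m = i ∧ n = j then c else 0 := by
  have h : (C c * X 0 ^ m * X 1 ^ n : P2)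
      = monomial (Finsupp.single 0 m + Finsupp.single 1 n) c := by
    rw [mul_assoc, X_pow_eq_monomial, X_pow_eq_monomial, monomial_mul, C_mul_monomial]
    simp
  rw [h, mcoeff, coeff_monomial]
  congr 1
  apply propext
  constructor
  · intro h
    have h0 := DFunLike.congr_fun h 0
    have h1 := DFunLike.congr_fun h 1
    simp at h0 h1
    exact ⟨h0, h1⟩
  · rintro ⟨rfl, rfl⟩
    rfl

lemma mcoeff_quartic (e0 e1 e2 e3 e4 : ℂ) (j : ℕ) :
    mcoeff (4 - j) j (C e0 * X 0 ^ 4 * X 1 ^ 0 + C e1 * X 0 ^ 3 * X 1 ^ 1 + C e2 * X 0 ^ 2 * X 1 ^ 2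
      + C e3 * X 0 ^ 1 * X 1 ^ 3 + C e4 * X 0 ^ 0 * X 1 ^ 4)
      = (if j = 0 then e0 else 0) + (if j = 1 then e1 else 0) + (if j = 2 then e2 else 0)
        + (if j = 3 then e3 else 0) + (if j = 4 then e4 else 0) := by
  have hadd : ∀ i j (F G : P2), mcoeff i j (F + G) = mcoeff i j F + mcoeff i j G :=
    fun _ _ _ _ => coeff_add _ _ _
  simp only [hadd, mcoeff_monomial]
  congr 1
  · congr 1
    · congr 1
      · congr 1 <;> (congr 1; apply propext; omega)
      · congr 1; apply propext; omega
    · congr 1; apply propext; omega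
  · congr 1; apply propext; omega

/-- Bracket expression of the invariant `S` of the quartic with homogeneous roots `a, b, c, d`. -/
def S4 (a b c d : Fin 2 → ℂ) : ℂ :=
  1 / 24 * (br a b ^ 2 * br c d ^ 2 + br a c ^ 2 * br b d ^ 2 + br a d ^ 2 * br b c ^ 2)

/-- Bracket expression of `S³ - 27T²` for the quartic with homogeneous roots `a, b, c, d`. -/
def D4 (a b c d : Fin 2 → ℂ) : ℂ :=
  1 / 256 * (br a b * br a c * br a d * br b c * br b d * br c d) ^ 2

lemma quartic_invariants (a b c d : Fin 2 → ℂ) :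
    Sq (lin a * lin b * lin c * lin d) = S4 a b c d ∧
    S4 a b c d ^ 3 - 27 * Tq (lin a * lin b * lin c * lin d) ^ 2
      = D4 a b c d := by
  have h : lin a * lin b * lin c * lin d =
      C (a 1 * b 1 * c 1 * d 1) * X 0 ^ 4 * X 1 ^ 0
      + C (-(a 0 * b 1 * c 1 * d 1 + a 1 * b 0 * c 1 * d 1 + a 1 * b 1 * c 0 * d 1
          + a 1 * b 1 * c 1 * d 0)) * X 0 ^ 3 * X 1 ^ 1
      + C (a 0 * b 0 * c 1 * d 1 + a 0 * b 1 * c 0 * d 1 + a 0 * b 1 * c 1 * d 0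
          + a 1 * b 0 * c 0 * d 1 + a 1 * b 0 * c 1 * d 0 + a 1 * b 1 * c 0 * d 0)
        * X 0 ^ 2 * X 1 ^ 2
      + C (-(a 1 * b 0 * c 0 * d 0 + a 0 * b 1 * c 0 * d 0 + a 0 * b 0 * c 1 * d 0
          + a 0 * b 0 * c 0 * d 1)) * X 0 ^ 1 * X 1 ^ 3
      + C (a 0 * b 0 * c 0 * d 0) * X 0 ^ 0 * X 1 ^ 4 := by
    simp only [lin, map_add, map_mul, map_neg]
    ring
  have m0 := mcoeff_quartic (a 1 * b 1 * c 1 * d 1)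
    (-(a 0 * b 1 * c 1 * d 1 + a 1 * b 0 * c 1 * d 1 + a 1 * b 1 * c 0 * d 1
          + a 1 * b 1 * c 1 * d 0))
    (a 0 * b 0 * c 1 * d 1 + a 0 * b 1 * c 0 * d 1 + a 0 * b 1 * c 1 * d 0
          + a 1 * b 0 * c 0 * d 1 + a 1 * b 0 * c 1 * d 0 + a 1 * b 1 * c 0 * d 0)
    (-(a 1 * b 0 * c 0 * d 0 + a 0 * b 1 * c 0 * d 0 + a 0 * b 0 * c 1 * d 0
          + a 0 * b 0 * c 0 * d 1)) (a 0 * b 0 * c 0 * d 0)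
  rw [← h] at m0
  have k0 := m0 0
  have k1 := m0 1
  have k2 := m0 2
  have k3 := m0 3
  have k4 := m0 4
  norm_num at k0 k1 k2 k3 k4
  rw [Sq, Tq, k0, k1, k2, k3, k4, S4, D4]
  simp only [br]
  constructor <;> ring

/-- The coefficient of `z²` in `∏ (dᵢ z - nᵢ)`. -/
def b3 (n d : Fin 5 → ℂ) : ℂ :=
  -(d 0 * d 1 * n 2 * n 3 * n 4 + d 0 * d 2 * n 1 * n 3 * n 4 + d 0 * d 3 * n 1 * n 2 * n 4
    + d 0 * d 4 * n 1 * n 2 * n 3 + d 1 * d 2 * n 0 * n 3 * n 4 + d 1 * d 3 * n 0 * n 2 * n 4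
    + d 1 * d 4 * n 0 * n 2 * n 3 + d 2 * d 3 * n 0 * n 1 * n 4 + d 2 * d 4 * n 0 * n 1 * n 3
    + d 3 * d 4 * n 0 * n 1 * n 2)

lemma coeff_two_prod (n d : Fin 5 → ℂ) :
    (∏ i : Fin 5, (Polynomial.C (d i) * Polynomial.X - Polynomial.C (n i))).coeff 2 = b3 n d := by
  have h0 : ∀ (a b : ℂ) (G : Polynomial ℂ),
      ((Polynomial.C a * Polynomial.X - Polynomial.C b) * G).coeff 0 = -b * G.coeff 0 := by
    intro a b G
    simp [sub_mul, mul_assoc]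
  have h1 : ∀ (a b : ℂ) (G : Polynomial ℂ) (k : ℕ),
      ((Polynomial.C a * Polynomial.X - Polynomial.C b) * G).coeff (k + 1)
        = a * G.coeff k - b * G.coeff (k + 1) := by
    intro a b G k
    simp [sub_mul, mul_assoc]
  rw [Fin.prod_univ_five, ← mul_one (_ * _)]
  simp only [mul_assoc, h0, h1, Polynomial.coeff_one, b3]
  norm_num
  ring

/-- The values `S(Qᵢ)` for the five quartics obtained by omitting one root. -/
def Sv (l : Fin 5 → Fin 2 → ℂ) : Fin 5 → ℂ :=
  ![S4 (l 1) (l 2) (l 3) (l 4), S4 (l 0) (l 2) (l 3) (l 4), S4 (l 0) (l 1) (l 3) (l 4),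
    S4 (l 0) (l 1) (l 2) (l 4), S4 (l 0) (l 1) (l 2) (l 3)]

/-- The values `S(Qᵢ)³ - 27T(Qᵢ)²` for the five quartics obtained by omitting one root. -/
def Dv (l : Fin 5 → Fin 2 → ℂ) : Fin 5 → ℂ :=
  ![D4 (l 1) (l 2) (l 3) (l 4), D4 (l 0) (l 2) (l 3) (l 4), D4 (l 0) (l 1) (l 3) (l 4),
    D4 (l 0) (l 1) (l 2) (l 4), D4 (l 0) (l 1) (l 2) (l 3)]

lemma quarticOmit_invariants (l : Fin 5 → Fin 2 → ℂ) (i : Fin 5) :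
    Sq (quarticOmit l i) = Sv l i ∧
      Sv l i ^ 3 - 27 * Tq (quarticOmit l i) ^ 2 = Dv l i := by
  have e0 : (Finset.univ : Finset (Fin 5)).erase 0 = {1, 2, 3, 4} := by decide
  have e1 : (Finset.univ : Finset (Fin 5)).erase 1 = {0, 2, 3, 4} := by decide
  have e2 : (Finset.univ : Finset (Fin 5)).erase 2 = {0, 1, 3, 4} := by decide
  have e3 : (Finset.univ : Finset (Fin 5)).erase 3 = {0, 1, 2, 4} := by decide
  have e4 : (Finset.univ : Finset (Fin 5)).erase 4 = {0, 1, 2, 3} := by decide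
  have h := fun a b c d => quartic_invariants (l a) (l b) (l c) (l d)
  fin_cases i <;>
  simp [quarticOmit, e0, e1, e2, e3, e4, Sv, Dv, ← mul_assoc, h]

lemma Binv_three (l : Fin 5 → Fin 2 → ℂ) : Binv l 3 = b3 (fun i => Sv l i ^ 3) (Dv l) := by
  rw [Binv, Rbar, ← coeff_two_prod]
  simp only [(quarticOmit_invariants l _).1, (quarticOmit_invariants l _).2]

/-! ### Reduction to normalised roots -/

/-- The claimed value of `B₃` in terms of `J`, `K`, `L`. -/
def rhs (J K L : ℂ) : ℂ :=
  5 ^ 16 / (2 ^ 25 * 3 ^ 9) *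
      (-(2 ^ 11) * 5 ^ 4 * L ^ 2 - 2 ^ 9 * 3 * 5 ^ 3 * L * K * J + 2 * 5 ^ 3 * 11 * L * J ^ 3
        + 2 ^ 9 * 17 * K ^ 3 - 2 ^ 2 * 23 * 37 * K ^ 2 * J ^ 2 + 3 ^ 5 * K * J ^ 4 - 2 * J ^ 6)

/-- The claimed value of `B₃` as a function of the roots. -/
def Brhs (l : Fin 5 → Fin 2 → ℂ) : ℂ :=
  rhs (Jc (rootCoeff l)) (Kc (rootCoeff l)) (Lc (rootCoeff l))

/-- `B₃` as a function of the roots, through brackets. -/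
def Blhs (l : Fin 5 → Fin 2 → ℂ) : ℂ := b3 (fun i => Sv l i ^ 3) (Dv l)

/-- The normalised roots `∞, 0, 1, s, t`. -/
def nroots (s t : ℂ) : Fin 5 → Fin 2 → ℂ := ![![1, 0], ![0, 1], ![1, 1], ![s, 1], ![t, 1]]

lemma rootCoeff_nroots (s t : ℂ) :
    rootCoeff (nroots s t) 0 = 0 ∧ rootCoeff (nroots s t) 1 = -1 / 5 ∧
    rootCoeff (nroots s t) 2 = (1 + s + t) / 10 ∧
    rootCoeff (nroots s t) 3 = -(s + t + s * t) / 10 ∧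
    rootCoeff (nroots s t) 4 = s * t / 5 ∧ rootCoeff (nroots s t) 5 = 0 := by
  refine ⟨?_, ?_, ?_, ?_, ?_, ?_⟩ <;>
  simp [rootCoeff, nroots, mulLin, Nat.choose] <;> ring

/-- If `lᵢ = cᵢ • g mᵢ` with `g = !![α, β; γ, δ]`, then `(x lᵢ) = cᵢ (ξ mᵢ)` with
`ξ = (δ x₁ - β x₂, -γ x₁ + α x₂)`. -/
lemma rootCoeff_transform (l : Fin 5 → Fin 2 → ℂ) (c : Fin 5 → ℂ) (α β γ δ s t : ℂ)
    (h0 : ∀ i, l i 0 = c i * (α * nroots s t i 0 + β * nroots s t i 1))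
    (h1 : ∀ i, l i 1 = c i * (γ * nroots s t i 0 + δ * nroots s t i 1)) :
    ∀ i < 6, rootCoeff l i
      = (c 0 * c 1 * c 2 * c 3 * c 4) * subst 5 δ (-β) (-γ) α (rootCoeff (nroots s t)) i := by
  obtain ⟨e0, e1, e2, e3, e4, e5⟩ := rootCoeff_nroots s t
  intro i hi
  interval_cases i <;>
  simp only [subst, step, Function.iterate_succ_apply', Function.iterate_zero, id_eq, Nat.reduceSub,
    e0, e1, e2, e3, e4, e5, zero_add, Nat.reduceAdd] <;>
  simp [rootCoeff, mulLin, h0, h1, nroots, Nat.choose] <;> ring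

lemma Brhs_transform (l : Fin 5 → Fin 2 → ℂ) (c : Fin 5 → ℂ) (α β γ δ s t : ℂ)
    (h0 : ∀ i, l i 0 = c i * (α * nroots s t i 0 + β * nroots s t i 1))
    (h1 : ∀ i, l i 1 = c i * (γ * nroots s t i 0 + δ * nroots s t i 1)) :
    Brhs l = (c 0 * c 1 * c 2 * c 3 * c 4) ^ 24 * (α * δ - β * γ) ^ 60 * Brhs (nroots s t) := by
  have h := rootCoeff_transform l c α β γ δ s t h0 h1
  rw [Brhs, Brhs, Jc_subst h, Kc_subst h, Lc_subst h,
    show δ * α - -β * -γ = α * δ - β * γ by ring]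
  generalize α * δ - β * γ = e
  generalize c 0 * c 1 * c 2 * c 3 * c 4 = d
  simp only [rhs]
  ring

lemma Blhs_transform (l m : Fin 5 → Fin 2 → ℂ) (c : Fin 5 → ℂ) (e : ℂ)
    (h : ∀ i j, br (l i) (l j) = c i * c j * e * br (m i) (m j)) :
    Blhs l = (c 0 * c 1 * c 2 * c 3 * c 4) ^ 24 * e ^ 60 * Blhs m := by
  have hS : ∀ i j k n, S4 (l i) (l j) (l k) (l n)
      = (c i * c j * c k * c n) ^ 2 * e ^ 4 * S4 (m i) (m j) (m k) (m n) := by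
    intro i j k n
    simp only [S4, h]
    ring
  have hD : ∀ i j k n, D4 (l i) (l j) (l k) (l n)
      = (c i * c j * c k * c n) ^ 6 * e ^ 12 * D4 (m i) (m j) (m k) (m n) := by
    intro i j k n
    simp only [D4, h]
    ring
  have key : ∀ f x y : Fin 5 → ℂ, b3 (fun i => f i * x i) (fun i => f i * y i)
      = f 0 * f 1 * f 2 * f 3 * f 4 * b3 x y := by
    intro f x y
    simp only [b3]
    ring
  set f : Fin 5 → ℂ := ![(c 1 * c 2 * c 3 * c 4) ^ 6 * e ^ 12, (c 0 * c 2 * c 3 * c 4) ^ 6 * e ^ 12,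
    (c 0 * c 1 * c 3 * c 4) ^ 6 * e ^ 12, (c 0 * c 1 * c 2 * c 4) ^ 6 * e ^ 12,
    (c 0 * c 1 * c 2 * c 3) ^ 6 * e ^ 12] with hf
  have e1 : (fun i => Sv l i ^ 3) = fun i => f i * Sv m i ^ 3 := by
    funext i
    fin_cases i <;> simp [Sv, hf, hS] <;> ring
  have e2 : Dv l = fun i => f i * Dv m i := by
    funext i
    fin_cases i <;> simp [Dv, hf, hD]
  have e3 : f 0 * f 1 * f 2 * f 3 * f 4 = (c 0 * c 1 * c 2 * c 3 * c 4) ^ 24 * e ^ 60 := by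
    simp only [hf, Matrix.cons_val]
    ring
  rw [Blhs, e1, e2, key, Blhs, e3]

/-- Projective transformations are simply transitive on triples of distinct points: the matrix `g`
has columns `x • l₀` and `y • l₁`, where `l₂ = x • l₀ + y • l₁`. The conditions on `l₃` and `l₄` keep
them away from `∞`. -/
lemma exists_normal (l : Fin 5 → Fin 2 → ℂ) (h01 : br (l 0) (l 1) ≠ 0) (h02 : br (l 0) (l 2) ≠ 0)
    (h12 : br (l 1) (l 2) ≠ 0) (h03 : br (l 0) (l 3) ≠ 0) (h04 : br (l 0) (l 4) ≠ 0) :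
    ∃ (c : Fin 5 → ℂ) (α β γ δ s t : ℂ),
      (∀ i, l i 0 = c i * (α * nroots s t i 0 + β * nroots s t i 1)) ∧
      (∀ i, l i 1 = c i * (γ * nroots s t i 0 + δ * nroots s t i 1)) := by
  set x := -br (l 1) (l 2) / br (l 0) (l 1) with hx
  set y := br (l 0) (l 2) / br (l 0) (l 1) with hy
  have hx0 : x ≠ 0 := div_ne_zero (neg_ne_zero.mpr h12) h01
  have hy0 : y ≠ 0 := div_ne_zero h02 h01
  -- Expansion (Cramer) in the basis `l 0`, `l 1`.
  have expand : ∀ v : Fin 2 → ℂ, ∀ k,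
      br (l 0) (l 1) * v k = br v (l 1) * l 0 k + br (l 0) v * l 1 k := by
    intro v k
    fin_cases k <;> simp [br] <;> ring
  have key2 : ∀ k, l 2 k = x * l 0 k + y * l 1 k := by
    intro k
    have := expand (l 2) k
    rw [hx, hy]
    field_simp
    rw [mul_comm, this]
    simp only [br]
    ring
  have key : ∀ i, br (l 0) (l i) ≠ 0 → ∀ k, l i k = br (l 0) (l i) / br (l 0) (l 2) *
      (x * l 0 k * (br (l i) (l 1) * br (l 0) (l 2) / (-br (l 1) (l 2) * br (l 0) (l i)))
        + y * l 1 k) := by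
    intro i hi k
    have := expand (l i) k
    rw [hx, hy]
    field_simp
    linear_combination this
  refine ⟨![x⁻¹, y⁻¹, 1, br (l 0) (l 3) / br (l 0) (l 2), br (l 0) (l 4) / br (l 0) (l 2)],
    x * l 0 0, y * l 1 0, x * l 0 1, y * l 1 1,
    br (l 3) (l 1) * br (l 0) (l 2) / (-br (l 1) (l 2) * br (l 0) (l 3)),
    br (l 4) (l 1) * br (l 0) (l 2) / (-br (l 1) (l 2) * br (l 0) (l 4)), ?_, ?_⟩
  · intro i
    fin_cases i
    · simp [nroots, hx0]
    · simp [nroots, hy0]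
    · simpa [nroots] using key2 0
    · simpa [nroots] using key 3 h03 0
    · simpa [nroots] using key 4 h04 0
  · intro i
    fin_cases i
    · simp [nroots, hx0]
    · simp [nroots, hy0]
    · simpa [nroots] using key2 1
    · simpa [nroots] using key 3 h03 1
    · simpa [nroots] using key 4 h04 1

/-! ### The identity for normalised roots -/

/-- Here `r = (1-s)(1-t)`, `w = (s-t)²`, and `y`, `z` are the sum and the product of `s² - s` and
`t² - t`. The factors for the quartics omitting `∞`, `0`, `1` are symmetric in `s` and `t`; those
for the quartics omitting `s` and `t` are exchanged by the symmetry, and enter only through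
symmetric combinations. -/
lemma Blhs_nroots (s t p q y z r w n₀ n₁ n₂ : ℂ) (hp : p = s + t) (hq : q = s * t)
    (hr : r = 1 - p + q) (hw : w = p ^ 2 - 4 * q) (hy : y = p ^ 2 - p - 2 * q) (hz : z = q * r)
    (h₀ : n₀ = (p ^ 2 - p * q + q ^ 2 - 3 * q) ^ 3) (h₁ : n₁ = (p ^ 2 - p - 3 * q + 1) ^ 3)
    (h₂ : n₂ = (p ^ 2 - 3 * q) ^ 3) :
    Blhs (nroots s t) = -1 / (2 ^ 16 * 12 ^ 9) *
      (q ^ 2 * r ^ 2 * w ^ 2 * (r ^ 2 * n₂ + q ^ 2 * n₁ + n₀) * (z + y + 1) ^ 3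
        + w * (q ^ 2 * r ^ 2 * n₁ * n₂ + r ^ 2 * n₀ * n₂ + q ^ 2 * n₀ * n₁)
          * (z ^ 2 * y + 6 * z ^ 2 + 3 * z * y + y ^ 2 - 2 * z)
        + n₀ * n₁ * n₂ * z ^ 2) := by
  have S0 : Sv (nroots s t) 0 ^ 3 = n₀ / 12 ^ 3 := by
    rw [h₀, hp, hq]; simp only [Sv, S4, br, nroots, Matrix.cons_val]; ring
  have S1 : Sv (nroots s t) 1 ^ 3 = n₁ / 12 ^ 3 := by
    rw [h₁, hp, hq]; simp only [Sv, S4, br, nroots, Matrix.cons_val]; ring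
  have S2 : Sv (nroots s t) 2 ^ 3 = n₂ / 12 ^ 3 := by
    rw [h₂, hp, hq]; simp only [Sv, S4, br, nroots, Matrix.cons_val]; ring
  have D0 : Dv (nroots s t) 0 = q ^ 2 * r ^ 2 * w / 256 := by
    rw [hr, hw, hp, hq]; simp only [Dv, D4, br, nroots, Matrix.cons_val]; ring
  have D1 : Dv (nroots s t) 1 = r ^ 2 * w / 256 := by
    rw [hr, hw, hp, hq]; simp only [Dv, D4, br, nroots, Matrix.cons_val]; ring
  have D2 : Dv (nroots s t) 2 = q ^ 2 * w / 256 := by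
    rw [hw, hp, hq]; simp only [Dv, D4, br, nroots, Matrix.cons_val]; ring
  have N : Sv (nroots s t) 3 ^ 3 * Sv (nroots s t) 4 ^ 3 = (z + y + 1) ^ 3 / 12 ^ 6 := by
    rw [hz, hy, hr, hp, hq]; simp only [Sv, S4, br, nroots, Matrix.cons_val]; ring
  have M : Dv (nroots s t) 3 * Sv (nroots s t) 4 ^ 3 + Dv (nroots s t) 4 * Sv (nroots s t) 3 ^ 3
      = (z ^ 2 * y + 6 * z ^ 2 + 3 * z * y + y ^ 2 - 2 * z) / (256 * 12 ^ 3) := by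
    rw [hz, hy, hr, hp, hq]; simp only [Sv, Dv, S4, D4, br, nroots, Matrix.cons_val]; ring
  have E : Dv (nroots s t) 3 * Dv (nroots s t) 4 = z ^ 2 / 256 ^ 2 := by
    rw [hz, hr, hp, hq]; simp only [Dv, D4, br, nroots, Matrix.cons_val]; ring
  simp only [Blhs, b3, S0, S1, S2, D0, D1, D2]
  generalize Sv (nroots s t) 3 ^ 3 = x₃ at *
  generalize Sv (nroots s t) 4 ^ 3 = x₄ at *
  linear_combination
    (-(q ^ 2 * r ^ 2 * w ^ 2 * (r ^ 2 * n₂ + q ^ 2 * n₁ + n₀)) / (256 ^ 2 * 12 ^ 3)) * N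
    - (w * (q ^ 2 * r ^ 2 * n₁ * n₂ + r ^ 2 * n₀ * n₂ + q ^ 2 * n₀ * n₁)) / (256 * 12 ^ 6) * M
    - n₀ * n₁ * n₂ / 12 ^ 9 * E

set_option maxHeartbeats 4000000 in
lemma B_nroots (s t : ℂ) : Blhs (nroots s t) = Brhs (nroots s t) := by
  obtain ⟨e0, e1, e2, e3, e4, e5⟩ := rootCoeff_nroots s t
  rw [Blhs_nroots s t _ _ _ _ _ _ _ _ _ rfl rfl rfl rfl rfl rfl rfl rfl rfl]
  rw [add_assoc] at e2
  simp only [Brhs, rhs, Jc, Kc, Lc, cc3, pol2, cc1, e0, e1, e2, e3, e4, e5, zero_add, Nat.reduceAdd]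
  generalize s * t = q
  generalize s + t = p
  ring

/-! ### General position and density -/

lemma B_generic (l : Fin 5 → Fin 2 → ℂ) (h01 : br (l 0) (l 1) ≠ 0) (h02 : br (l 0) (l 2) ≠ 0)
    (h12 : br (l 1) (l 2) ≠ 0) (h03 : br (l 0) (l 3) ≠ 0) (h04 : br (l 0) (l 4) ≠ 0) :
    Blhs l = Brhs l := by
  obtain ⟨c, α, β, γ, δ, s, t, h0, h1⟩ := exists_normal l h01 h02 h12 h03 h04
  rw [Brhs_transform l c α β γ δ s t h0 h1, ← B_nroots]
  refine Blhs_transform l _ c _ fun i j => ?_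
  simp only [br, h0, h1]
  ring

lemma continuous_Blhs : Continuous Blhs := by
  unfold Blhs b3 Sv Dv S4 D4 br
  simp only [Matrix.cons_val]
  fun_prop

lemma continuous_rootCoeff (k : ℕ) : Continuous fun l => rootCoeff l k := by
  have h : ∀ (i : Fin 5) (e : (Fin 5 → Fin 2 → ℂ) → ℕ → ℂ), (∀ k, Continuous fun l => e l k) →
      ∀ k, Continuous fun l => mulLin (l i) (e l) k := by
    intro i e he k
    have := he
    cases k with
    | zero => simp only [mulLin]; fun_prop
    | succ k => simp only [mulLin]; fun_prop
  unfold rootCoeff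
  refine Continuous.div_const ?_ _
  exact h 0 _ (h 1 _ (h 2 _ (h 3 _ (h 4 (fun _ => Pi.single 0 1) fun k => continuous_const)))) k

lemma continuous_Brhs : Continuous Brhs := by
  have := continuous_rootCoeff
  unfold Brhs rhs Jc Kc Lc
  simp only [pol2, cc1, cc3, zero_add, Nat.reduceAdd]
  fun_prop

lemma finite_br_zero (a b u v : Fin 2 → ℂ) (h : br u v ≠ 0) :
    {x : ℂ | br (a + x • u) (b + x • v) = 0}.Finite := by
  let P : Polynomial ℂ := Polynomial.C (br u v) * Polynomial.X ^ 2
    + Polynomial.C (br a v + br u b) * Polynomial.X + Polynomial.C (br a b)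
  have hP : P ≠ 0 := by
    intro h0
    have := congrArg (fun Q => Polynomial.coeff Q 2) h0
    simp [P] at this
    exact h this
  refine (P.roots.toFinset.finite_toSet).subset fun x hx => ?_
  simp only [Finset.mem_coe, Multiset.mem_toFinset, Polynomial.mem_roots hP,
    Polynomial.IsRoot.def]
  rw [Set.mem_ofPred_eq] at hx
  rw [← hx]
  simp [P, br]
  ring

/-- The points `(1, i)` have pairwise nonzero brackets, so moving the roots in these directions gives
general position for all but finitely many values of the parameter. -/
lemma B_eq (l : Fin 5 → Fin 2 → ℂ) : Blhs l = Brhs l := by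
  let u : Fin 5 → Fin 2 → ℂ := fun i => ![1, (i : ℕ)]
  have hu : ∀ i j, i ≠ j → br (u i) (u j) ≠ 0 := by
    intro i j hij h
    simp only [br, u, Matrix.cons_val_zero, Matrix.cons_val_one, one_mul, mul_one, sub_eq_zero,
      Nat.cast_inj] at h
    exact hij (Fin.ext h.symm)
  let Z : Fin 5 → Fin 5 → Set ℂ := fun i j => {x : ℂ | br (l i + x • u i) (l j + x • u j) = 0}
  have hZ : ∀ i j, i ≠ j → (Z i j).Finite := fun i j hij => finite_br_zero _ _ _ _ (hu i j hij)
  have hfin : (Z 0 1 ∪ Z 0 2 ∪ Z 1 2 ∪ Z 0 3 ∪ Z 0 4).Finite :=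
    ((((hZ 0 1 (by decide)).union (hZ 0 2 (by decide))).union (hZ 1 2 (by decide))).union
      (hZ 0 3 (by decide))).union (hZ 0 4 (by decide))
  have hdense := hfin.countable.dense_compl ℂ
  have hline : Continuous fun x : ℂ => l + x • u := by fun_prop
  have hfun : (fun x : ℂ => Blhs (l + x • u)) = fun x => Brhs (l + x • u) := by
    refine Continuous.ext_on hdense (continuous_Blhs.comp hline) (continuous_Brhs.comp hline) ?_
    intro x hx
    simp only [Set.mem_compl_iff, Set.mem_union, not_or] at hx
    obtain ⟨⟨⟨⟨h01, h02⟩, h12⟩, h03⟩, h04⟩ := hx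
    exact B_generic _ h01 h02 h12 h03 h04
  simpa using congrFun hfun 0

/-- `B₃(F) = (5¹⁶/(2²⁵·3⁹))(−2¹¹·5⁴·L² − 2⁹·3·5³·LKJ + 2·5³·11·LJ³ + 2⁹·17·K³
− 2²·23·37·K²J² + 3⁵·KJ⁴ − 2·J⁶)`. -/
theorem binv_three_formula (l : Fin 5 → Fin 2 → ℂ) :
    Binv l 3 = 5 ^ 16 / (2 ^ 25 * 3 ^ 9) *
      (-(2 ^ 11) * 5 ^ 4 * Linv (quinticOf l) ^ 2
        - 2 ^ 9 * 3 * 5 ^ 3 * Linv (quinticOf l) * Kinv (quinticOf l) * Jinv (quinticOf l)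
        + 2 * 5 ^ 3 * 11 * Linv (quinticOf l) * Jinv (quinticOf l) ^ 3
        + 2 ^ 9 * 17 * Kinv (quinticOf l) ^ 3
        - 2 ^ 2 * 23 * 37 * Kinv (quinticOf l) ^ 2 * Jinv (quinticOf l) ^ 2
        + 3 ^ 5 * Kinv (quinticOf l) * Jinv (quinticOf l) ^ 4
        - 2 * Jinv (quinticOf l) ^ 6) := by
  rw [Binv_three, quinticOf_eq_form, Jinv_form, Kinv_form, Linv_form]
  exact B_eq l

end
end
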